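/- arXiv:2504.12478 — 2 statements merged into one kernel-verified Lean document; each statement's English description precedes it below -/
import Mathlib

section
/- Let g ~ N(0, I_n) be a standard Gaussian vector in R^n, and let X_1 = M_1 g, Y_1 = M_2 g for deterministic nonzero row vectors M_1, M_2 ∈ R^{1×n} such that |Corr(X_1, Y_1)| < 1. Then for every m > 0 there exists a constant C(m) > 0 (depending only on m) such that for all real p > 1: E[(max(|X_1|, |Y_1|))^{m−2} · (min(|X_1|, |Y_1|)/max(|X_1|, |Y_1|))^{p−2} · (1 − min(|X_1|, |Y_1|)/max(|X_1|, |Y_1|))] ≤ C(m, X_1, Y_1)/(p(p−1)), where C(m, X_1, Y_1) = C(m) · (max(Var(X_1), Var(Y_1)))^{m/2} / sqrt(Var(X_1) · Var(Y_1) · (1 − Corr(X_1, Y_1)^2)). -/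
open MeasureTheory ProbabilityTheory Real
open scoped NNReal BigOperators

/-- The covariance `Cov(f, g) = E[f g] - E[f] E[g]` of two real random variables. -/
noncomputable def covar {Ω : Type*} [MeasurableSpace Ω] (P : Measure Ω)
    (f g : Ω → ℝ) : ℝ :=
  (∫ ω, f ω * g ω ∂P) - (∫ ω, f ω ∂P) * ∫ ω, g ω ∂P

/-- The Pearson correlation `Corr(f, g) = Cov(f, g) / sqrt(Var f · Var g)`. -/
noncomputable def corr {Ω : Type*} [MeasurableSpace Ω] (P : Measure Ω)
    (f g : Ω → ℝ) : ℝ :=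
  covar P f g / Real.sqrt (variance f P * variance g P)

/-- The law of a standard Gaussian vector `g ~ N(0, I_n)` in `ℝ^n`. -/
noncomputable def stdGaussianPi (n : ℕ) : Measure (Fin n → ℝ) :=
  Measure.pi fun _ => gaussianReal 0 1

/-- The linear form `x ↦ M x = ∑ i, M i * x i` given by a row vector `M ∈ ℝ^{1×n}`. -/
def linForm {n : ℕ} (M : Fin n → ℝ) : (Fin n → ℝ) → ℝ :=
  fun x => ∑ i, M i * x i

open scoped ENNReal in
lemma aux_joint {Ω : Type*} [MeasurableSpace Ω] (P : Measure Ω) (X Y : Ω → ℝ)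
    (h : HasGaussianLaw (fun ω => (X ω, Y ω)) P) (hX0 : ∫ ω, X ω ∂P = 0) (hY0 : ∫ ω, Y ω ∂P = 0)
    (a b c : ℝ) (ha : variance X P = a) (hb : variance Y P = b) (hc : covariance X Y P = c)
    (ha0 : 0 < a) (hD : 0 < a * b - c ^ 2) (F : ℝ × ℝ → ℝ≥0∞) (hF : Measurable F) :
    ∫⁻ ω, F (X ω, Y ω) ∂P = ∫⁻ x, ∫⁻ y, ENNReal.ofReal ((2 * π * √(a * b - c ^ 2))⁻¹ *
      rexp (-(b * x ^ 2 - 2 * c * x * y + a * y ^ 2) / (2 * (a * b - c ^ 2)))) * F (x, y) := by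
  have hP := h.isProbabilityMeasure
  set Z : Ω → ℝ := fun ω => Y ω - (c / a) * X ω with hZ
  have hX := h.fst
  have hY := h.snd
  have hXZ : HasGaussianLaw (fun ω => (X ω, Z ω)) P := by
    have := h.map_fun ((ContinuousLinearMap.fst ℝ ℝ ℝ).prod
      (ContinuousLinearMap.snd ℝ ℝ ℝ - (c / a) • ContinuousLinearMap.fst ℝ ℝ ℝ))
    simpa using this
  have hcXX : covariance X (fun ω => (c / a) * X ω) P = c := by
    rw [covariance_const_mul_right, covariance_self hX.aemeasurable, ha]; field_simp
  have hmX : MemLp (fun ω => (c / a) * X ω) 2 P := hX.memLp_two.const_mul _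
  have hcov : covariance X Z P = 0 := by
    rw [hZ, covariance_fun_sub_right hX.memLp_two hY.memLp_two hmX, hcXX, hc, sub_self]
  have hvZ : variance Z P = b - c ^ 2 / a := by
    rw [hZ, variance_fun_sub hY.memLp_two hmX, covariance_const_mul_right, covariance_comm, hc, hb,
      variance_const_mul, ha]
    field_simp; ring
  have hind := hXZ.indepFun_of_covariance_eq_zero hcov
  have hZm := hXZ.snd.aemeasurable
  have hd0 : 0 < b - c ^ 2 / a := by
    have : b - c ^ 2 / a = (a * b - c ^ 2) / a := by field_simp
    rw [this]; positivity
  have hlX := hX.map_eq_gaussianReal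
  have hlZ := hXZ.snd.map_eq_gaussianReal
  have hZ0 : ∫ ω, Z ω ∂P = 0 := by
    rw [hZ, integral_sub hY.integrable (hX.integrable.const_mul _), integral_const_mul, hX0, hY0]; simp
  rw [hX0, ha] at hlX
  rw [hZ0, hvZ] at hlZ
  have hmap := (indepFun_iff_map_prod_eq_prod_map_map hX.aemeasurable hZm).1 hind
  have h1 : ∫⁻ ω, F (X ω, Y ω) ∂P
      = ∫⁻ q, F (q.1, q.2 + (c / a) * q.1) ∂(P.map (fun ω => (X ω, Z ω))) := by
    rw [lintegral_map' (by fun_prop) (hX.aemeasurable.prodMk hZm)]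
    simp [hZ]
  rw [h1, hmap, hlX, hlZ, lintegral_prod _ (by fun_prop),
    gaussianReal_of_var_ne_zero _ (by simpa using ha0),
    gaussianReal_of_var_ne_zero _ (by simpa only [ne_eq, Real.toNNReal_eq_zero, not_le] using hd0)]
  rw [lintegral_withDensity_eq_lintegral_mul₀ (by fun_prop)
    (by
      refine Measurable.aemeasurable ?_
      apply Measurable.lintegral_prod_right'
        (f := fun q : ℝ × ℝ => F (q.1, q.2 + c / a * q.1))
      fun_prop)]
  refine lintegral_congr fun x => ?_
  simp only [Pi.mul_apply]
  rw [lintegral_withDensity_eq_lintegral_mul₀ (by fun_prop) (by fun_prop),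
    ← lintegral_const_mul _ (by fun_prop)]
  conv_rhs => rw [← lintegral_add_right_eq_self _ (c / a * x)]
  refine lintegral_congr fun z => ?_
  simp only [Pi.mul_apply]
  rw [← mul_assoc, gaussianPDF, gaussianPDF, ← ENNReal.ofReal_mul (gaussianPDFReal_nonneg _ _ _)]
  congr 2
  simp only [gaussianPDFReal, Real.coe_toNNReal _ ha0.le, Real.coe_toNNReal _ hd0.le]
  rw [mul_mul_mul_comm, ← Real.exp_add, ← mul_inv, ← Real.sqrt_mul (by positivity)]
  congr 3
  · rw [show 2 * π * a * (2 * π * (b - c ^ 2 / a)) = (2 * π) ^ 2 * (a * b - c ^ 2) by field_simp,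
      Real.sqrt_mul (by positivity), Real.sqrt_sq (by positivity)]
  · have e : b - c ^ 2 / a = (a * b - c ^ 2) / a := by field_simp
    rw [e]
    have := hD.ne'
    field_simp
    ring

lemma aux_gauss (n : ℕ) (M₁ M₂ : Fin n → ℝ) :
    HasGaussianLaw (fun ω => (linForm M₁ ω, linForm M₂ ω)) (stdGaussianPi n) := by
  have h1 : HasGaussianLaw (fun ω : Fin n → ℝ => fun i => ω i) (stdGaussianPi n) := by
    have hi := iIndepFun_pi (μ := fun _ : Fin n => gaussianReal 0 1) (X := fun _ => id)
      (fun i => aemeasurable_id)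
    refine iIndepFun.hasGaussianLaw (X := fun i (ω : Fin n → ℝ) => ω i) (fun i => ?_) hi
    have := measurePreserving_eval (fun _ : Fin n => gaussianReal 0 1) i
    refine ⟨?_⟩
    have e := this.map_eq
    change IsGaussian (Measure.map (Function.eval i : (Fin n → ℝ) → ℝ) (stdGaussianPi n))
    rw [stdGaussianPi, e]; infer_instance
  have := h1.map_fun ((∑ i, M₁ i • ContinuousLinearMap.proj (R := ℝ) (φ := fun _ : Fin n => ℝ) i).prod
    (∑ i, M₂ i • ContinuousLinearMap.proj (R := ℝ) (φ := fun _ : Fin n => ℝ) i))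
  simpa [linForm] using this

instance (n : ℕ) : IsProbabilityMeasure (stdGaussianPi n) := by
  unfold stdGaussianPi; infer_instance

lemma aux_mean (n : ℕ) (M : Fin n → ℝ) : ∫ ω, linForm M ω ∂(stdGaussianPi n) = 0 := by
  unfold linForm
  have hi : ∀ i, Integrable (fun x : Fin n → ℝ => x i) (stdGaussianPi n) := fun i =>
    (measurePreserving_eval (fun _ : Fin n => gaussianReal 0 1) i).integrable_comp_of_integrable
      (g := id) ((memLp_id_gaussianReal 1).integrable le_rfl)
  rw [integral_finsetSum _ (fun i _ => (hi i).const_mul _)]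
  refine Finset.sum_eq_zero fun i _ => ?_
  rw [integral_const_mul]
  have := (measurePreserving_eval (fun _ : Fin n => gaussianReal 0 1) i).map_eq
  have h2 : ∫ x, id x ∂(gaussianReal 0 1) = 0 := integral_id_gaussianReal
  rw [← this, integral_map (measurable_pi_apply i).aemeasurable (by fun_prop)] at h2
  simp only [id] at h2
  rw [stdGaussianPi, h2, mul_zero]

lemma aux_var (n : ℕ) (M : Fin n → ℝ) (hM : M ≠ 0) :
    0 < variance (linForm M) (stdGaussianPi n) := by
  have : variance (linForm M) (stdGaussianPi n) = ∑ i, M i ^ 2 := by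
    have h := variance_sum_pi (μ := fun _ : Fin n => gaussianReal 0 1)
      (X := fun i x => M i * x) (fun i => (memLp_id_gaussianReal 2).const_mul (M i))
    have e : linForm M = ∑ i, fun ω : Fin n → ℝ => M i * ω i := by
      ext; simp [linForm]
    rw [e, stdGaussianPi, h]
    refine Finset.sum_congr rfl fun i _ => ?_
    rw [variance_const_mul, variance_fun_id_gaussianReal]; simp
  rw [this]
  obtain ⟨i, hi⟩ := Function.ne_iff.1 hM
  exact Finset.sum_pos' (fun _ _ => sq_nonneg _) ⟨i, Finset.mem_univ _, by
    have : M i ≠ 0 := hi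
    positivity⟩
open scoped ENNReal
lemma aux_abs (f : ℝ → ℝ≥0∞) :
    ∫⁻ x, f |x| = 2 * ∫⁻ x in Set.Ioi 0, f x := by
  have h1 : ∫⁻ x in Set.Ioi 0, f |x| = ∫⁻ x in Set.Ioi 0, f x :=
    setLIntegral_congr_fun measurableSet_Ioi fun x hx => by
      simp only [abs_of_pos (show (0:ℝ) < x from hx)]
  have h2 : ∫⁻ x in Set.Iio 0, f |x| = ∫⁻ x in Set.Ioi 0, f x := by
    rw [← h1]
    have := (Measure.measurePreserving_neg (volume : Measure ℝ)).setLIntegral_comp_preimage_emb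
      (MeasurableEquiv.neg ℝ).measurableEmbedding (fun x => f |x|) (Set.Ioi 0)
    simpa using this
  rw [← lintegral_add_compl _ (measurableSet_Ioi (a := (0:ℝ))), Set.compl_Ioi,
    setLIntegral_congr Iio_ae_eq_Iic.symm, h1, h2, two_mul]

/-- one half of the integrand -/
noncomputable def kk (m p V x y : ℝ) : ℝ :=
  x ^ (m - 2) * (y / x) ^ (p - 2) * (1 - y / x) * rexp (-x ^ 2 / (2 * V))

lemma aux_inner (m p V x : ℝ) (hp : 1 < p) (hx : 0 < x) :
    ∫⁻ y in Set.Ioc 0 x, ENNReal.ofReal (kk m p V x y)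
      = ENNReal.ofReal (x ^ (m - 1) * rexp (-x ^ 2 / (2 * V)) * (1 / (p * (p - 1)))) := by
  have hi1 : IntervalIntegrable (fun y : ℝ => y ^ (p - 2)) volume 0 x :=
    intervalIntegral.intervalIntegrable_rpow' (by linarith)
  have hi2 : IntervalIntegrable (fun y : ℝ => y ^ (p - 1)) volume 0 x :=
    intervalIntegral.intervalIntegrable_rpow' (by linarith)
  set A := x ^ (m - 2) * rexp (-x ^ 2 / (2 * V)) with hA
  have heq : ∀ y ∈ Set.Ioc 0 x, kk m p V x y =
      A * (y ^ (p - 2) / x ^ (p - 2) - y ^ (p - 1) / x ^ (p - 1)) := by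
    intro y hy
    have hy0 := hy.1
    have e : p - 1 = (p - 2) + 1 := by ring
    rw [kk, Real.div_rpow hy0.le hx.le, e, Real.rpow_add hy0, Real.rpow_add hx, Real.rpow_one,
      Real.rpow_one, hA]
    have : x ^ (p - 2) ≠ 0 := (Real.rpow_pos_of_pos hx _).ne'
    field_simp
  have hii : IntervalIntegrable (fun y => A * (y ^ (p - 2) / x ^ (p - 2) - y ^ (p - 1) / x ^ (p - 1)))
      volume 0 x := ((hi1.div_const _).sub (hi2.div_const _)).const_mul _
  have hkk0 : ∀ y ∈ Set.Ioc 0 x, 0 ≤ kk m p V x y := by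
    intro y hy
    have := hy.1
    have h1 : y / x ≤ 1 := by rw [div_le_one hx]; exact hy.2
    unfold kk
    have : 0 ≤ 1 - y / x := by linarith
    positivity
  rw [setLIntegral_congr_fun measurableSet_Ioc (g := fun y => ENNReal.ofReal
      (A * (y ^ (p - 2) / x ^ (p - 2) - y ^ (p - 1) / x ^ (p - 1)))) (fun y hy => by simp only [heq y hy])]
  rw [← ofReal_integral_eq_lintegral_ofReal
    ((intervalIntegrable_iff_integrableOn_Ioc_of_le hx.le).1 hii)
    ((ae_restrict_iff' measurableSet_Ioc).2 (ae_of_all _ fun y hy => by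
      have := hkk0 y hy
      rw [heq y hy] at this; exact this))]
  rw [← intervalIntegral.integral_of_le hx.le, intervalIntegral.integral_const_mul,
    intervalIntegral.integral_sub (hi1.div_const _) (hi2.div_const _),
    intervalIntegral.integral_div, intervalIntegral.integral_div,
    integral_rpow (Or.inl (by linarith)), integral_rpow (Or.inl (by linarith))]
  congr 1
  have e1 : p - 2 + 1 = p - 1 := by ring
  have e2 : p - 1 + 1 = p := by ring
  rw [e1, e2, Real.zero_rpow (by linarith), Real.zero_rpow (by linarith)]
  have f1 : x ^ (p - 1) = x ^ (p - 2) * x := by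
    rw [← e1, Real.rpow_add hx, Real.rpow_one]
  have f2 : x ^ p = x ^ (p - 2) * x * x := by
    rw [← f1]; nth_rw 1 [← e2]; rw [Real.rpow_add hx, Real.rpow_one]
  have f3 : x ^ (m - 1) = x ^ (m - 2) * x := by
    rw [show m - 1 = (m - 2) + 1 by ring, Real.rpow_add hx, Real.rpow_one]
  rw [f2, f1, f3, hA]
  have : x ^ (p - 2) ≠ 0 := (Real.rpow_pos_of_pos hx _).ne'
  have : p - 1 ≠ 0 := by linarith
  have : p ≠ 0 := by linarith
  field_simp
  ring

lemma aux_outer (m p V : ℝ) (hm : 0 < m) (hp : 1 < p) (hV : 0 < V) :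
    ∫⁻ x in Set.Ioi 0, ENNReal.ofReal (x ^ (m - 1) * rexp (-x ^ 2 / (2 * V)) * (1 / (p * (p - 1))))
      = ENNReal.ofReal ((2 * V) ^ (m / 2) * (1 / 2) * Real.Gamma (m / 2) * (1 / (p * (p - 1)))) := by
  have hpp : 0 ≤ 1 / (p * (p - 1)) := by
    have : 0 < p - 1 := by linarith
    positivity
  have hI := integral_rpow_mul_exp_neg_mul_rpow (p := 2) (q := m - 1) (b := (2 * V)⁻¹)
    (by norm_num) (by linarith) (by positivity)
  have hfun : ∀ x : ℝ, x ^ (m - 1) * rexp (-(2 * V)⁻¹ * x ^ (2 : ℝ))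
      = x ^ (m - 1) * rexp (-x ^ 2 / (2 * V)) := by
    intro x
    rw [Real.rpow_two]; congr 2; field_simp
  simp only [hfun] at hI
  have hint : IntegrableOn (fun x : ℝ => x ^ (m - 1) * rexp (-x ^ 2 / (2 * V))) (Set.Ioi 0) := by
    have := integrableOn_rpow_mul_exp_neg_mul_sq (b := (2 * V)⁻¹) (by positivity)
      (s := m - 1) (by linarith)
    refine this.congr_fun (fun x _ => ?_) measurableSet_Ioi
    simp only
    rw [← hfun, Real.rpow_two]
  rw [← ofReal_integral_eq_lintegral_ofReal (hint.mul_const _)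
    ((ae_restrict_iff' measurableSet_Ioi).2 (ae_of_all _ fun x hx => by
      have : (0:ℝ) < x := hx
      simp only [Pi.zero_apply]
      positivity)), integral_mul_const, hI]
  rw [show m - 1 + 1 = m by ring]
  congr 4
  rw [Real.inv_rpow (by positivity), ← Real.rpow_neg (by positivity)]
  congr 1
  ring

lemma aux_double (m p V : ℝ) (hm : 0 < m) (hp : 1 < p) (hV : 0 < V) :
    ∫⁻ x, ∫⁻ y, (if |y| ≤ |x| then ENNReal.ofReal (kk m p V |x| |y|) else 0) =
     4 * ENNReal.ofReal ((2 * V) ^ (m / 2) * (1 / 2) * Real.Gamma (m / 2) * (1 / (p * (p - 1)))) := by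
  have h1 := aux_abs (fun x => ∫⁻ y, (if |y| ≤ x then ENNReal.ofReal (kk m p V x |y|) else 0))
  rw [h1]
  have h2 : ∀ x ∈ Set.Ioi (0:ℝ), ∫⁻ y, (if |y| ≤ x then ENNReal.ofReal (kk m p V x |y|) else 0)
      = 2 * ENNReal.ofReal (x ^ (m - 1) * rexp (-x ^ 2 / (2 * V)) * (1 / (p * (p - 1)))) := by
    intro x hx
    rw [aux_abs (fun y => if y ≤ x then ENNReal.ofReal (kk m p V x y) else 0),
      ← aux_inner m p V x hp hx]
    congr 1
    rw [← Set.Ioi_inter_Iic, Set.inter_comm, ← setLIntegral_indicator measurableSet_Iic]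
    rfl
  rw [setLIntegral_congr_fun measurableSet_Ioi h2, lintegral_const_mul _ (by fun_prop),
    aux_outer m p V hm hp hV, ← mul_assoc]
  norm_num
lemma aux_exp (a b c V x y : ℝ) (ha : 0 < a) (hD : 0 < a * b - c ^ 2) (hV : b ≤ V) (hV0 : 0 < V) (hb : 0 < b) :
    -(b * x ^ 2 - 2 * c * x * y + a * y ^ 2) / (2 * (a * b - c ^ 2)) ≤ -|y| ^ 2 / (2 * V) := by
  have h1 : -(b * x ^ 2 - 2 * c * x * y + a * y ^ 2) / (2 * (a * b - c ^ 2)) =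
      -y ^ 2 / (2 * b) - (b * x - c * y) ^ 2 / (2 * b * (a * b - c ^ 2)) := by
    rw [neg_div, neg_div, ← neg_add', neg_inj, div_add_div _ _ (by positivity) (by positivity),
      div_eq_div_iff (by positivity) (by positivity)]
    ring
  have h2 : 0 ≤ (b * x - c * y) ^ 2 / (2 * b * (a * b - c ^ 2)) := by positivity
  have h3 : y ^ 2 / (2 * V) ≤ y ^ 2 / (2 * b) := by gcongr
  rw [h1, sq_abs, neg_div, neg_div]
  linarith

/-- the integrand -/
noncomputable def hh (m p : ℝ) (q : ℝ × ℝ) : ℝ :=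
  (max |q.1| |q.2|) ^ (m - 2) * (min |q.1| |q.2| / max |q.1| |q.2|) ^ (p - 2)
    * (1 - min |q.1| |q.2| / max |q.1| |q.2|)

lemma hh_nonneg (m p : ℝ) (q : ℝ × ℝ) : 0 ≤ hh m p q := by
  unfold hh
  have h : min |q.1| |q.2| / max |q.1| |q.2| ≤ 1 :=
    div_le_one_of_le₀ min_le_max (le_max_of_le_left (abs_nonneg _))
  have h0 : 0 ≤ 1 - min |q.1| |q.2| / max |q.1| |q.2| := by linarith
  have h1 : 0 ≤ max |q.1| |q.2| := le_max_of_le_left (abs_nonneg _)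
  have h2 : 0 ≤ min |q.1| |q.2| := le_min (abs_nonneg _) (abs_nonneg _)
  positivity

lemma hh_swap (m p x y : ℝ) : hh m p (x, y) = hh m p (y, x) := by
  simp only [hh, max_comm, min_comm]

lemma aux_half (m p K e V x y : ℝ) (hK : 0 ≤ K) (hxy : |y| ≤ |x|) (he : e ≤ -|x| ^ 2 / (2 * V)) :
    ENNReal.ofReal (K * rexp e) * ENNReal.ofReal (hh m p (x, y))
      ≤ ENNReal.ofReal K * ENNReal.ofReal (kk m p V |x| |y|) := by
  rw [← ENNReal.ofReal_mul (by positivity), ← ENNReal.ofReal_mul hK]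
  apply ENNReal.ofReal_le_ofReal
  have h := hh_nonneg m p (x, y)
  have : kk m p V |x| |y| = hh m p (x, y) * rexp (-|x| ^ 2 / (2 * V)) := by
    simp only [kk, hh, max_eq_left hxy, min_eq_right hxy]
  rw [this, mul_assoc, mul_comm (rexp e)]
  gcongr

/-- half integrand on the plane -/
noncomputable def kh (m p V x y : ℝ) : ℝ≥0∞ :=
  if |y| ≤ |x| then ENNReal.ofReal (kk m p V |x| |y|) else 0

lemma kh_meas (m p V : ℝ) : Measurable (fun q : ℝ × ℝ => kh m p V q.1 q.2) := by
  unfold kh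
  refine Measurable.ite (measurableSet_le (by fun_prop) (by fun_prop)) ?_ measurable_const
  unfold kk
  fun_prop

lemma hh_meas (m p : ℝ) : Measurable (hh m p) := by
  unfold hh
  fun_prop

lemma aux_main {Ω : Type*} [MeasurableSpace Ω] (P : Measure Ω) (X Y : Ω → ℝ)
    (h : HasGaussianLaw (fun ω => (X ω, Y ω)) P) (hX0 : ∫ ω, X ω ∂P = 0) (hY0 : ∫ ω, Y ω ∂P = 0)
    (a b c V m p : ℝ) (ha : variance X P = a) (hb : variance Y P = b) (hc : covariance X Y P = c)
    (ha0 : 0 < a) (hb0 : 0 < b) (hD : 0 < a * b - c ^ 2) (hm : 0 < m) (hp : 1 < p)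
    (haV : a ≤ V) (hbV : b ≤ V) :
    ∫⁻ ω, ENNReal.ofReal (hh m p (X ω, Y ω)) ∂P ≤ ENNReal.ofReal (
      (2 * π * √(a * b - c ^ 2))⁻¹ * (8 * ((2 * V) ^ (m / 2) * (1 / 2) * Real.Gamma (m / 2) * (1 / (p * (p - 1)))))) := by
  have hV : 0 < V := ha0.trans_le haV
  rw [aux_joint P X Y h hX0 hY0 a b c ha hb hc ha0 hD (fun q => ENNReal.ofReal (hh m p q))
    ((hh_meas m p).ennreal_ofReal)]
  set K := (2 * π * √(a * b - c ^ 2))⁻¹ with hKdef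
  have hK : 0 ≤ K := by positivity
  have hb' : ∀ x y : ℝ, ENNReal.ofReal (K *
      rexp (-(b * x ^ 2 - 2 * c * x * y + a * y ^ 2) / (2 * (a * b - c ^ 2)))) *
        ENNReal.ofReal (hh m p (x, y)) ≤ ENNReal.ofReal K * (kh m p V x y + kh m p V y x) := by
    intro x y
    rcases le_total |y| |x| with hxy | hxy
    · have he := aux_exp b a c V y x hb0 (by linarith) haV hV ha0
      rw [show -(a * y ^ 2 - 2 * c * y * x + b * x ^ 2) / (2 * (b * a - c ^ 2))
        = -(b * x ^ 2 - 2 * c * x * y + a * y ^ 2) / (2 * (a * b - c ^ 2)) by ring_nf] at he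
      refine (aux_half m p K _ V x y hK hxy he).trans ?_
      gcongr
      rw [kh, if_pos hxy]
      exact le_self_add
    · have he := aux_exp a b c V x y ha0 hD hbV hV hb0
      rw [hh_swap]
      refine (aux_half m p K _ V y x hK hxy he).trans ?_
      gcongr
      rw [kh, kh, if_pos hxy]
      exact le_add_self
  have hmeas := kh_meas m p V
  have hmeas' : Measurable (fun q : ℝ × ℝ => kh m p V q.2 q.1) := hmeas.comp measurable_swap
  have hi1 : ∀ x, Measurable (fun y => kh m p V x y) := fun x => hmeas.comp measurable_prodMk_left
  have hi2 : ∀ x, Measurable (fun y => kh m p V y x) := fun x => hmeas.comp measurable_prodMk_right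
  have hd := aux_double m p V hm hp hV
  change ∫⁻ x, ∫⁻ y, kh m p V x y = _ at hd
  have hp1 : 0 < p - 1 := by linarith
  have hG : 0 < Real.Gamma (m / 2) := Real.Gamma_pos_of_pos (by positivity)
  calc _ ≤ ∫⁻ x, ∫⁻ y, ENNReal.ofReal K * (kh m p V x y + kh m p V y x) :=
        lintegral_mono fun x => lintegral_mono fun y => hb' x y
    _ = ENNReal.ofReal K * ((∫⁻ x, ∫⁻ y, kh m p V x y) + (∫⁻ x, ∫⁻ y, kh m p V y x)) := by
        rw [← lintegral_add_left hmeas.lintegral_prod_right',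
          ← lintegral_const_mul' _ _ ENNReal.ofReal_ne_top]
        refine lintegral_congr fun x => ?_
        rw [lintegral_const_mul' _ _ ENNReal.ofReal_ne_top, lintegral_add_left (hi1 x)]
    _ = _ := by
        rw [lintegral_lintegral_swap (f := fun x y => kh m p V y x) hmeas'.aemeasurable, hd,
          ENNReal.ofReal_mul hK, ENNReal.ofReal_mul (by norm_num : (0:ℝ) ≤ 8), ← add_mul]
        norm_num
/-- **Lemma (second integral bound).** Let `g ~ N(0, I_n)`, `X₁ = M₁ g`, `Y₁ = M₂ g` with
`M₁, M₂ ≠ 0` and `|Corr(X₁, Y₁)| < 1`. For every `m > 0` there is `C(m) > 0` such that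
for all `p > 1`,
`E[(max(|X₁|,|Y₁|))^(m-2) (min/max)^(p-2) (1 - min/max)] ≤ C(m, X₁, Y₁)/(p (p-1))`,
where `C(m, X₁, Y₁) = C(m) (max(Var X₁, Var Y₁))^(m/2) / sqrt(Var X₁ · Var Y₁ · (1 - Corr(X₁,Y₁)²))`. -/
theorem integral_bound_ratio_pow_diff
    (m : ℝ) (hm : 0 < m) :
    ∃ C : ℝ, 0 < C ∧
      ∀ (n : ℕ) (M₁ M₂ : Fin n → ℝ), M₁ ≠ 0 → M₂ ≠ 0 →
        |corr (stdGaussianPi n) (linForm M₁) (linForm M₂)| < 1 →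
        ∀ p : ℝ, 1 < p →
          (∫ x, (max |linForm M₁ x| |linForm M₂ x|) ^ (m - 2)
              * (min |linForm M₁ x| |linForm M₂ x|
                  / max |linForm M₁ x| |linForm M₂ x|) ^ (p - 2)
              * (1 - min |linForm M₁ x| |linForm M₂ x|
                  / max |linForm M₁ x| |linForm M₂ x|) ∂(stdGaussianPi n))
            ≤ C * (max (variance (linForm M₁) (stdGaussianPi n))
                    (variance (linForm M₂) (stdGaussianPi n))) ^ (m / 2)
              / Real.sqrt (variance (linForm M₁) (stdGaussianPi n)
                  * variance (linForm M₂) (stdGaussianPi n)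
                  * (1 - corr (stdGaussianPi n) (linForm M₁) (linForm M₂) ^ 2))
              / (p * (p - 1)) := by
  refine ⟨(2 * π)⁻¹ * 4 * 2 ^ (m / 2) * Real.Gamma (m / 2), ?_, ?_⟩
  · have hG : 0 < Real.Gamma (m / 2) := Real.Gamma_pos_of_pos (by positivity)
    positivity
  intro n M₁ M₂ h1 h2 hcorr p hp
  have hg := aux_gauss n M₁ M₂
  have ha0 := aux_var n M₁ h1
  have hb0 := aux_var n M₂ h2
  have hm1 := aux_mean n M₁
  have hm2 := aux_mean n M₂
  have hcov : covar (stdGaussianPi n) (linForm M₁) (linForm M₂)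
      = covariance (linForm M₁) (linForm M₂) (stdGaussianPi n) := by
    rw [covariance_eq_sub hg.fst.memLp_two hg.snd.memLp_two]; rfl
  unfold corr at hcorr ⊢
  rw [hcov] at hcorr ⊢
  set P := stdGaussianPi n
  generalize ha : variance (linForm M₁) P = a at *
  generalize hb : variance (linForm M₂) P = b at *
  generalize hc : covariance (linForm M₁) (linForm M₂) P = c at *
  have hab : 0 < a * b := by positivity
  have hsq : (c / √(a * b)) ^ 2 = c ^ 2 / (a * b) := by
    rw [div_pow, Real.sq_sqrt hab.le]
  have hlt : c ^ 2 / (a * b) < 1 := by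
    rw [← hsq, ← sq_abs]
    exact pow_lt_one₀ (abs_nonneg _) hcorr (by norm_num)
  have hD : 0 < a * b - c ^ 2 := by
    rw [div_lt_one hab] at hlt; linarith
  have hDe : a * b * (1 - (c / √(a * b)) ^ 2) = a * b - c ^ 2 := by
    rw [hsq]; field_simp
  rw [hDe]
  have hmain := aux_main P (linForm M₁) (linForm M₂) hg hm1 hm2 a b c (max a b) m p ha hb hc ha0 hb0
    hD hm hp (le_max_left _ _) (le_max_right _ _)
  have hp1 : 0 < p - 1 := by linarith
  have hG : 0 < Real.Gamma (m / 2) := Real.Gamma_pos_of_pos (by positivity)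
  have hV : 0 < max a b := lt_max_of_lt_left ha0
  have hle := norm_integral_le_lintegral_norm (μ := P)
    (fun x => hh m p (linForm M₁ x, linForm M₂ x))
  simp only [Real.norm_of_nonneg (hh_nonneg _ _ _)] at hle
  have hfin := (Real.le_norm_self _).trans (hle.trans (ENNReal.toReal_mono ENNReal.ofReal_ne_top hmain))
  rw [ENNReal.toReal_ofReal (by positivity)] at hfin
  refine hfin.trans (le_of_eq ?_)
  rw [Real.mul_rpow (by norm_num) hV.le]
  have : 0 < √(a * b - c ^ 2) := Real.sqrt_pos.2 hD
  field_simp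
  norm_num
end

section
/- Let X ~ N(0, Σ^X) and Y ~ N(0, Σ^Y) be centered Gaussian random vectors in R^k such that for all 1 ≤ i, j ≤ k, 2|Σ^X_{ij} − Σ^Y_{ij}| ≤ (Σ^Y_{ii} − Σ^X_{ii}) + (Σ^Y_{jj} − Σ^X_{jj}), and assume the nondegeneracy conditions Var(X_i) > 0, Var(Y_i) > 0 for all i and |Corr(X_i, X_j)| < 1, |Corr(Y_i, Y_j)| < 1 for all i ≠ j. Fix a real m ≥ 1 and for an even integer p define f_p(x_1,...,x_k) = (x_1^p + ... + x_k^p + e^{−p^2})^{m/p}. Then limsup_{p → ∞, p even} (E[f_p(X)] − E[f_p(Y)]) ≤ 0. -/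
open MeasureTheory ProbabilityTheory Real Filter
open scoped NNReal BigOperators Topology

/-- A random vector `X` on `(Ω, P)` is a centered Gaussian random vector if every
linear combination of its coordinates is a centered real Gaussian random variable. -/
def IsCenteredGaussianVec {Ω : Type*} [MeasurableSpace Ω] {k : ℕ}
    (P : Measure Ω) (X : Ω → Fin k → ℝ) : Prop :=
  ∀ a : Fin k → ℝ,
    Measure.map (fun ω => ∑ i, a i * X ω i) P
      = gaussianReal 0 (variance (fun ω => ∑ i, a i * X ω i) P).toNNReal

lemma aux_mvt {f f' : ℝ → ℝ} {K : ℝ} (hf : ∀ t, HasDerivAt f (f' t) t)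
    (hK : ∀ t ∈ Set.Icc (0:ℝ) 1, |f' t| ≤ K) (t : ℝ) (ht : t ∈ Set.Icc (0:ℝ) 1) :
    |f t - f 0| ≤ K := by
  have hK0 : 0 ≤ K := (abs_nonneg _).trans (hK t ht)
  have h := (convex_Icc (0:ℝ) 1).norm_image_sub_le_of_norm_hasDerivWithin_le
    (f := f) (f' := f') (C := K) (fun x _ => (hf x).hasDerivWithinAt)
    (fun x hx => hK x hx) (Set.left_mem_Icc.2 zero_le_one) ht
  simp only [Real.norm_eq_abs, sub_zero] at h
  have : |t| ≤ 1 := abs_le.2 ⟨by linarith [ht.1], ht.2⟩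
  nlinarith

lemma aux_taylor {g g1 g2 g3 : ℝ → ℝ} {K : ℝ} (h1 : ∀ t, HasDerivAt g (g1 t) t)
    (h2 : ∀ t, HasDerivAt g1 (g2 t) t) (h3 : ∀ t, HasDerivAt g2 (g3 t) t)
    (hK : ∀ t, |g3 t| ≤ K) :
    |g 1 - g 0 - g1 0 - g2 0 / 2| ≤ K := by
  have a2 := aux_mvt h3 (fun t _ => hK t)
  have a1 := aux_mvt (f := fun t => g1 t - g2 0 * t) (f' := fun t => g2 t - g2 0) (K := K)
    (fun t => ((h2 t).fun_sub ((hasDerivAt_id t).const_mul (g2 0))).congr_deriv (by simp)) a2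
  have a0 := aux_mvt (f := fun t => g t - g1 0 * t - g2 0 * (t ^ 2 / 2))
    (f' := fun t => g1 t - g1 0 - g2 0 * t) (K := K)
    (fun t => by
      have := ((h1 t).fun_sub ((hasDerivAt_id t).const_mul (g1 0))).fun_sub
        ((((hasDerivAt_id t).fun_pow 2).div_const 2).const_mul (g2 0))
      exact this.congr_deriv (by simp)) (fun t ht => by
        have := a1 t ht
        convert this using 2
        ring)
  have := a0 1 (Set.right_mem_Icc.2 zero_le_one)
  convert this using 2
  ring

noncomputable def SS {k : ℕ} (C : ℝ) (x : Fin k → ℝ) : ℝ := C + ∑ i, Real.cosh (x i)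

lemma SS_ge {k : ℕ} {C : ℝ} (hC : 1 ≤ C) (x : Fin k → ℝ) : 1 ≤ SS C x := by
  have : 0 ≤ ∑ i, Real.cosh (x i) := Finset.sum_nonneg fun i _ => (Real.cosh_pos _).le
  unfold SS; linarith

lemma abs_sinh_le_cosh (x : ℝ) : |Real.sinh x| ≤ Real.cosh x := by
  apply abs_le_of_sq_le_sq _ (Real.cosh_pos x).le
  have := Real.cosh_sq x
  linarith

lemma sum_abs_sinh_le {k : ℕ} {C : ℝ} (hC : 1 ≤ C) (x : Fin k → ℝ) :
    ∑ i, |Real.sinh (x i)| ≤ SS C x := by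
  have := Finset.sum_le_sum (s := Finset.univ) fun i _ => abs_sinh_le_cosh (x i)
  unfold SS; linarith

/-- first and second order terms -/
noncomputable def LL {k : ℕ} (C : ℝ) (w h : Fin k → ℝ) : ℝ :=
  (∑ i, h i * Real.sinh (w i)) / SS C w

noncomputable def QQ {k : ℕ} (C : ℝ) (w h : Fin k → ℝ) : ℝ :=
  (∑ i, h i ^ 2 * Real.cosh (w i)) / SS C w - ((∑ i, h i * Real.sinh (w i)) / SS C w) ^ 2

lemma taylor_bound {k : ℕ} {C : ℝ} (hC : 1 ≤ C) (w h : Fin k → ℝ) :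
    |Real.log (SS C (w + h)) - Real.log (SS C w) - LL C w h - QQ C w h / 2| ≤ 6 * ‖h‖ ^ 3 := by
  set S0 : ℝ → ℝ := fun t => C + ∑ i, Real.cosh (w i + t * h i) with hS0
  set S1 : ℝ → ℝ := fun t => ∑ i, h i * Real.sinh (w i + t * h i) with hS1
  set S2 : ℝ → ℝ := fun t => ∑ i, h i ^ 2 * Real.cosh (w i + t * h i) with hS2
  set S3 : ℝ → ℝ := fun t => ∑ i, h i ^ 3 * Real.sinh (w i + t * h i) with hS3
  have dl : ∀ t i, HasDerivAt (fun t => w i + t * h i) (h i) t := fun t i => by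
    simpa using ((hasDerivAt_id t).mul_const (h i)).const_add (w i)
  have d0 : ∀ t, HasDerivAt S0 (S1 t) t := fun t => by
    refine HasDerivAt.const_add C ?_
    refine HasDerivAt.fun_sum fun i _ => ?_
    simpa [mul_comm] using (dl t i).cosh
  have d1 : ∀ t, HasDerivAt S1 (S2 t) t := fun t => by
    refine HasDerivAt.fun_sum fun i _ => ?_
    exact (((dl t i).sinh).const_mul (h i)).congr_deriv (by ring)
  have d2 : ∀ t, HasDerivAt S2 (S3 t) t := fun t => by
    refine HasDerivAt.fun_sum fun i _ => ?_
    exact (((dl t i).cosh).const_mul (h i ^ 2)).congr_deriv (by ring)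
  have eS : ∀ t, S0 t = SS C (w + t • h) := fun t => by simp [hS0, SS]
  have pos : ∀ t, 0 < S0 t := fun t => by rw [eS]; linarith [SS_ge hC (w + t • h)]
  have ne : ∀ t, S0 t ≠ 0 := fun t => (pos t).ne'
  have hh : ∀ i, |h i| ≤ ‖h‖ := fun i => norm_le_pi_norm h i
  have hn : 0 ≤ ‖h‖ := norm_nonneg h
  have cs : ∀ t, ∑ i, Real.cosh (w i + t * h i) ≤ S0 t := fun t => by simp only [hS0]; linarith
  have bd : ∀ (t : ℝ) (r : ℕ) (u : ℝ → ℝ), (∀ x, |u x| ≤ Real.cosh x) →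
      |(∑ i, h i ^ r * u (w i + t * h i)) / S0 t| ≤ ‖h‖ ^ r := by
    intro t r u hu
    rw [abs_div, abs_of_pos (pos t), div_le_iff₀ (pos t)]
    calc _ ≤ ∑ i, |h i ^ r * u (w i + t * h i)| := Finset.abs_sum_le_sum_abs _ _
      _ ≤ ∑ i, ‖h‖ ^ r * Real.cosh (w i + t * h i) := by
        refine Finset.sum_le_sum fun i _ => ?_
        rw [abs_mul, abs_pow]
        exact mul_le_mul (pow_le_pow_left₀ (abs_nonneg _) (hh i) r) (hu _) (abs_nonneg _)
          (by positivity)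
      _ = ‖h‖ ^ r * ∑ i, Real.cosh (w i + t * h i) := by rw [Finset.mul_sum]
      _ ≤ _ := mul_le_mul_of_nonneg_left (cs t) (by positivity)
  have b1 : ∀ t, |S1 t / S0 t| ≤ ‖h‖ := fun t => by
    simpa using bd t 1 Real.sinh abs_sinh_le_cosh
  have b2 : ∀ t, |S2 t / S0 t| ≤ ‖h‖ ^ 2 := fun t =>
    bd t 2 Real.cosh (fun x => (abs_of_pos (Real.cosh_pos x)).le)
  have b3 : ∀ t, |S3 t / S0 t| ≤ ‖h‖ ^ 3 := fun t => bd t 3 Real.sinh abs_sinh_le_cosh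
  have key := aux_taylor (g := fun t => Real.log (S0 t)) (g1 := fun t => S1 t / S0 t)
    (g2 := fun t => S2 t / S0 t - (S1 t / S0 t) ^ 2)
    (g3 := fun t => S3 t / S0 t - 3 * (S2 t / S0 t) * (S1 t / S0 t) + 2 * (S1 t / S0 t) ^ 3)
    (K := 6 * ‖h‖ ^ 3)
    (fun t => (d0 t).log (ne t))
    (fun t => by
      refine ((d1 t).fun_div (d0 t) (ne t)).congr_deriv ?_
      have := ne t
      field_simp)
    (fun t => by
      have e1 := (d1 t).fun_div (d0 t) (ne t)
      have e2 := (d2 t).fun_div (d0 t) (ne t)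
      refine (e2.fun_sub (e1.fun_pow 2)).congr_deriv ?_
      have := ne t
      simp only [Nat.cast_ofNat, Nat.add_one_sub_one, pow_one]
      field_simp
      ring)
    (fun t => by
      set a := S1 t / S0 t
      set b := S2 t / S0 t
      set c := S3 t / S0 t
      have hba : |b * a| ≤ ‖h‖ ^ 2 * ‖h‖ := by
        rw [abs_mul]; exact mul_le_mul (b2 t) (b1 t) (abs_nonneg _) (by positivity)
      have haa : |a ^ 3| ≤ ‖h‖ ^ 3 := by
        rw [abs_pow]; exact pow_le_pow_left₀ (abs_nonneg _) (b1 t) 3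
      have hc := b3 t
      rw [abs_le] at *
      constructor <;> nlinarith)
  have e1 : S0 1 = SS C (w + h) := by rw [eS, one_smul]
  have e0 : S0 0 = SS C w := by rw [eS, zero_smul, add_zero]
  rw [e1, e0] at key
  simpa [LL, QQ, hS1, hS2] using key

/-- diagonal dominance -/
lemma diag_dom {k : ℕ} {C : ℝ} (hC : 1 ≤ C) (w : Fin k → ℝ) (D : Fin k → Fin k → ℝ)
    (hD : ∀ i j, 2 * |D i j| ≤ D i i + D j j) :
    0 ≤ (∑ i, D i i * Real.cosh (w i)) / SS C w
      - (∑ i, ∑ j, D i j * (Real.sinh (w i) * Real.sinh (w j))) / SS C w ^ 2 := by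
  have hS := SS_ge hC w
  have hpos : 0 < SS C w := by linarith
  have hDi : ∀ i, 0 ≤ D i i := fun i => by
    have := hD i i; have := abs_nonneg (D i i); linarith
  have key : ∑ i, ∑ j, D i j * (Real.sinh (w i) * Real.sinh (w j))
      ≤ (∑ i, D i i * Real.cosh (w i)) * SS C w := by
    calc _ ≤ ∑ i, ∑ j, ((D i i * |Real.sinh (w i)|) * |Real.sinh (w j)| / 2
            + |Real.sinh (w i)| * (D j j * |Real.sinh (w j)|) / 2) := by
          refine Finset.sum_le_sum fun i _ => Finset.sum_le_sum fun j _ => ?_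
          have h1 : D i j * (Real.sinh (w i) * Real.sinh (w j))
            ≤ |D i j| * (|Real.sinh (w i)| * |Real.sinh (w j)|) := by
            rw [← abs_mul, ← abs_mul]; exact le_abs_self _
          have h2 := mul_le_mul_of_nonneg_right (hD i j)
            (mul_nonneg (abs_nonneg (Real.sinh (w i))) (abs_nonneg (Real.sinh (w j))))
          nlinarith
      _ = (∑ i, D i i * |Real.sinh (w i)|) * ∑ j, |Real.sinh (w j)| := by
          simp only [Finset.sum_add_distrib, ← Finset.sum_div, ← Finset.sum_mul_sum]
          ring
      _ ≤ _ := by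
          refine mul_le_mul (Finset.sum_le_sum fun i _ =>
            mul_le_mul_of_nonneg_left (abs_sinh_le_cosh _) (hDi i)) (sum_abs_sinh_le hC w)
            (Finset.sum_nonneg fun i _ => abs_nonneg _)
            (Finset.sum_nonneg fun i _ => mul_nonneg (hDi i) (Real.cosh_pos _).le)
  rw [sub_nonneg, div_le_div_iff₀ (by positivity) hpos]
  nlinarith


lemma cont_logSS {k : ℕ} {C : ℝ} (hC : 1 ≤ C) :
    Continuous (fun x : Fin k → ℝ => Real.log (SS C x)) := by
  refine Continuous.log ?_ fun x => by linarith [SS_ge hC x]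
  unfold SS
  fun_prop

lemma int_pow {k : ℕ} (μ : Measure (Fin k → ℝ)) [IsGaussian μ] (n : ℕ) :
    Integrable (fun x => ‖x‖ ^ n) μ := by
  have := (IsGaussian.memLp_id μ (n : ENNReal) (by simp)).integrable_norm_pow'
  simpa using this

lemma int_prod {k : ℕ} (μ : Measure (Fin k → ℝ)) [IsGaussian μ] (i j : Fin k) :
    Integrable (fun x => x i * x j) μ := by
  refine (int_pow μ 2).mono' (by fun_prop) (ae_of_all _ fun x => ?_)
  rw [norm_mul, pow_two]
  exact mul_le_mul (norm_le_pi_norm x i) (norm_le_pi_norm x j) (norm_nonneg _) (norm_nonneg _)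

lemma int_coord {k : ℕ} (μ : Measure (Fin k → ℝ)) [IsGaussian μ] (i : Fin k) :
    Integrable (fun x => x i) μ := by
  refine (int_pow μ 1).mono' (measurable_pi_apply i).aestronglyMeasurable (ae_of_all _ fun x => ?_)
  simpa using (norm_le_pi_norm x i)

lemma LL_smul {k : ℕ} (C ε : ℝ) (w h : Fin k → ℝ) : LL C w (ε • h) = ε * LL C w h := by
  simp only [LL, Pi.smul_apply, smul_eq_mul, mul_assoc, ← Finset.mul_sum]
  rw [mul_div_assoc]

lemma QQ_smul {k : ℕ} (C ε : ℝ) (w h : Fin k → ℝ) : QQ C w (ε • h) = ε ^ 2 * QQ C w h := by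
  simp only [QQ, Pi.smul_apply, smul_eq_mul, mul_assoc, mul_pow, ← Finset.mul_sum]
  ring

lemma int_LL {k : ℕ} (μ : Measure (Fin k → ℝ)) [IsGaussian μ] (C : ℝ) (w : Fin k → ℝ) :
    Integrable (LL C w) μ := by
  unfold LL
  exact (integrable_finsetSum _ fun i _ => (int_coord μ i).mul_const _).div_const _

lemma QQ_eq {k : ℕ} (C : ℝ) (w h : Fin k → ℝ) : QQ C w h =
    (∑ i, h i * h i * Real.cosh (w i)) / SS C w
      - (∑ i, ∑ j, h i * h j * (Real.sinh (w i) * Real.sinh (w j))) / SS C w ^ 2 := by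
  unfold QQ
  rw [div_pow, pow_two (∑ i, h i * Real.sinh (w i)), Finset.sum_mul_sum]
  congr 2
  · exact Finset.sum_congr rfl fun i _ => by ring
  · exact Finset.sum_congr rfl fun i _ => Finset.sum_congr rfl fun j _ => by ring

lemma int_QQ {k : ℕ} (μ : Measure (Fin k → ℝ)) [IsGaussian μ] (C : ℝ) (w : Fin k → ℝ) :
    Integrable (QQ C w) μ := by
  rw [funext (QQ_eq C w)]
  exact ((integrable_finsetSum _ fun i _ => (int_prod μ i i).mul_const _).div_const _).sub
    ((integrable_finsetSum _ fun i _ => integrable_finsetSum _ fun j _ =>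
      (int_prod μ i j).mul_const _).div_const _)

lemma integral_LL {k : ℕ} (μ : Measure (Fin k → ℝ)) [IsGaussian μ] (C : ℝ) (w : Fin k → ℝ)
    (h0 : ∀ i, ∫ x, x i ∂μ = 0) : ∫ x, LL C w x ∂μ = 0 := by
  unfold LL
  rw [integral_div, integral_finsetSum _ fun i _ => (int_coord μ i).mul_const _]
  simp [integral_mul_const, h0]

lemma integral_QQ {k : ℕ} (μ : Measure (Fin k → ℝ)) [IsGaussian μ] (C : ℝ) (w : Fin k → ℝ) :
    ∫ x, QQ C w x ∂μ = (∑ i, (∫ x, x i * x i ∂μ) * Real.cosh (w i)) / SS C w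
      - (∑ i, ∑ j, (∫ x, x i * x j ∂μ) * (Real.sinh (w i) * Real.sinh (w j))) / SS C w ^ 2 := by
  rw [funext (QQ_eq C w), integral_sub
    ((integrable_finsetSum _ fun i _ => (int_prod μ i i).mul_const _).div_const _)
    ((integrable_finsetSum _ fun i _ => integrable_finsetSum _ fun j _ =>
      (int_prod μ i j).mul_const _).div_const _), integral_div, integral_div,
    integral_finsetSum _ fun i _ => (int_prod μ i i).mul_const _,
    integral_finsetSum _ fun i _ => integrable_finsetSum _ fun j _ =>
      (int_prod μ i j).mul_const _]
  congr 2
  · exact Finset.sum_congr rfl fun i _ => by rw [integral_mul_const]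
  · refine Finset.sum_congr rfl fun i _ => ?_
    rw [integral_finsetSum _ fun j _ => (int_prod μ i j).mul_const _]
    exact Finset.sum_congr rfl fun j _ => by rw [integral_mul_const]

lemma expand {k : ℕ} {C : ℝ} (hC : 1 ≤ C) (μ : Measure (Fin k → ℝ)) [IsGaussian μ]
    (h0 : ∀ i, ∫ x, x i ∂μ = 0) (w : Fin k → ℝ) {ε : ℝ} (hε : 0 ≤ ε) :
    Integrable (fun x => Real.log (SS C (w + ε • x))) μ ∧
    |∫ x, Real.log (SS C (w + ε • x)) ∂μ - (Real.log (SS C w) + ε ^ 2 / 2 * ∫ x, QQ C w x ∂μ)|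
      ≤ 6 * ε ^ 3 * ∫ x, ‖x‖ ^ 3 ∂μ := by
  have hq : Integrable (fun x => Real.log (SS C w) + ε * LL C w x + ε ^ 2 / 2 * QQ C w x) μ :=
    ((integrable_const _).add ((int_LL μ C w).const_mul ε)).add ((int_QQ μ C w).const_mul _)
  have hb : ∀ x, ‖Real.log (SS C (w + ε • x))
      - (Real.log (SS C w) + ε * LL C w x + ε ^ 2 / 2 * QQ C w x)‖ ≤ 6 * ε ^ 3 * ‖x‖ ^ 3 := by
    intro x
    have := taylor_bound hC w (ε • x)
    rw [LL_smul, QQ_smul, norm_smul, Real.norm_eq_abs, abs_of_nonneg hε] at this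
    rw [Real.norm_eq_abs]
    calc _ = _ := by congr 1; ring
      _ ≤ _ := this
      _ = _ := by ring
  have hc : Continuous (fun x : Fin k → ℝ => Real.log (SS C (w + ε • x))) :=
    (cont_logSS hC).comp (by fun_prop)
  have hd : Integrable (fun x => Real.log (SS C (w + ε • x))
      - (Real.log (SS C w) + ε * LL C w x + ε ^ 2 / 2 * QQ C w x)) μ :=
    ((int_pow μ 3).const_mul (6 * ε ^ 3)).mono'
      (hc.aestronglyMeasurable.sub hq.aestronglyMeasurable) (ae_of_all _ hb)
  have hi : Integrable (fun x => Real.log (SS C (w + ε • x))) μ := by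
    have := hd.add hq
    refine this.congr (ae_of_all _ fun x => ?_)
    simp
  refine ⟨hi, ?_⟩
  have e : ∫ x, (Real.log (SS C w) + ε * LL C w x + ε ^ 2 / 2 * QQ C w x) ∂μ
      = Real.log (SS C w) + ε ^ 2 / 2 * ∫ x, QQ C w x ∂μ := by
    have hA : Integrable (fun x => Real.log (SS C w) + ε * LL C w x) μ :=
      (integrable_const _).add ((int_LL μ C w).const_mul ε)
    rw [integral_add hA
      ((int_QQ μ C w).const_mul _), integral_add (integrable_const _) ((int_LL μ C w).const_mul ε),
      integral_const_mul, integral_const_mul, integral_LL μ C w h0]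
    simp
  rw [← e, ← integral_sub hi hq, ← integral_const_mul, ← Real.norm_eq_abs]
  exact norm_integral_le_of_norm_le ((int_pow μ 3).const_mul _) (ae_of_all _ hb)

def CovDom {k : ℕ} (μ ν : Measure (Fin k → ℝ)) : Prop :=
  ∀ i j, 2 * |(∫ x, x i * x j ∂μ) - ∫ x, x i * x j ∂ν| ≤
    (∫ x, x i * x i ∂ν) - (∫ x, x i * x i ∂μ) + ((∫ x, x j * x j ∂ν) - ∫ x, x j * x j ∂μ)

lemma step_le {k : ℕ} {C : ℝ} (hC : 1 ≤ C) (μ ν : Measure (Fin k → ℝ)) [IsGaussian μ]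
    [IsGaussian ν] (h0 : ∀ i, ∫ x, x i ∂μ = 0) (h0' : ∀ i, ∫ x, x i ∂ν = 0)
    (hD : CovDom μ ν) (w : Fin k → ℝ) {ε : ℝ} (hε : 0 ≤ ε) :
    ∫ x, Real.log (SS C (w + ε • x)) ∂μ ≤ ∫ x, Real.log (SS C (w + ε • x)) ∂ν
      + ε ^ 3 * (6 * (∫ x, ‖x‖ ^ 3 ∂μ + ∫ x, ‖x‖ ^ 3 ∂ν)) := by
  have a := (abs_le.1 (expand hC μ h0 w hε).2).2
  have b := (abs_le.1 (expand hC ν h0' w hε).2).1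
  have c := diag_dom hC w (fun i j => (∫ x, x i * x j ∂ν) - ∫ x, x i * x j ∂μ) (fun i j => by
    rw [abs_sub_comm]; exact hD i j)
  have d : ∫ x, QQ C w x ∂μ ≤ ∫ x, QQ C w x ∂ν := by
    rw [integral_QQ, integral_QQ]
    simp only [sub_mul, Finset.sum_sub_distrib, sub_div] at c
    linarith
  have := mul_le_mul_of_nonneg_left d (by positivity : 0 ≤ ε ^ 2 / 2)
  linarith

lemma step_le_lintegral {k : ℕ} {C : ℝ} (hC : 1 ≤ C) (μ ν : Measure (Fin k → ℝ)) [IsGaussian μ]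
    [IsGaussian ν] (h0 : ∀ i, ∫ x, x i ∂μ = 0) (h0' : ∀ i, ∫ x, x i ∂ν = 0)
    (hD : CovDom μ ν) {ε : ℝ} (hε : 0 ≤ ε) (ρ : Measure (Fin k → ℝ)) [IsProbabilityMeasure ρ] :
    ∫⁻ z, ENNReal.ofReal (Real.log (SS C z)) ∂(ρ.conv (μ.map (fun x => ε • x))) ≤
      ∫⁻ z, ENNReal.ofReal (Real.log (SS C z)) ∂(ρ.conv (ν.map (fun x => ε • x)))
      + ENNReal.ofReal (ε ^ 3 * (6 * (∫ x, ‖x‖ ^ 3 ∂μ + ∫ x, ‖x‖ ^ 3 ∂ν))) := by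
  have hm : Measurable (fun z : Fin k → ℝ => ENNReal.ofReal (Real.log (SS C z))) :=
    (cont_logSS hC).measurable.ennreal_ofReal
  have hsm : Measurable (fun x : Fin k → ℝ => ε • x) := by fun_prop
  have hP1 : IsProbabilityMeasure (μ.map (fun x => ε • x)) :=
    Measure.isProbabilityMeasure_map hsm.aemeasurable
  have hP2 : IsProbabilityMeasure (ν.map (fun x => ε • x)) :=
    Measure.isProbabilityMeasure_map hsm.aemeasurable
  have hlog : ∀ z : Fin k → ℝ, 0 ≤ Real.log (SS C z) := fun z => Real.log_nonneg (SS_ge hC z)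
  rw [Measure.lintegral_conv hm, Measure.lintegral_conv hm]
  set K := ENNReal.ofReal (ε ^ 3 * (6 * (∫ x, ‖x‖ ^ 3 ∂μ + ∫ x, ‖x‖ ^ 3 ∂ν))) with hK
  calc _ ≤ ∫⁻ w, ((∫⁻ y, ENNReal.ofReal (Real.log (SS C (w + y))) ∂(ν.map (fun x => ε • x))) + K)
        ∂ρ := by
        refine lintegral_mono fun w => ?_
        have hm' : Measurable (fun y => ENNReal.ofReal (Real.log (SS C (w + y)))) :=
          hm.comp (measurable_const_add w)
        simp only
        rw [lintegral_map hm' hsm, lintegral_map hm' hsm,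
          ← ofReal_integral_eq_lintegral_ofReal (expand hC μ h0 w hε).1
            (ae_of_all _ fun x => hlog _),
          ← ofReal_integral_eq_lintegral_ofReal (expand hC ν h0' w hε).1
            (ae_of_all _ fun x => hlog _), hK, ← ENNReal.ofReal_add]
        · exact ENNReal.ofReal_le_ofReal (step_le hC μ ν h0 h0' hD w hε)
        · exact integral_nonneg fun x => hlog _
        · have h1 : 0 ≤ ∫ x, ‖x‖ ^ 3 ∂μ := integral_nonneg fun x => by positivity
          have h2 : 0 ≤ ∫ x, ‖x‖ ^ 3 ∂ν := integral_nonneg fun x => by positivity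
          positivity
    _ = _ := by
        rw [lintegral_add_right _ measurable_const]
        simp

noncomputable def cpow {k : ℕ} (μ : Measure (Fin k → ℝ)) : ℕ → Measure (Fin k → ℝ)
  | 0 => Measure.dirac 0
  | n + 1 => (cpow μ n).conv μ

instance cpow_prob {k : ℕ} (μ : Measure (Fin k → ℝ)) [IsProbabilityMeasure μ] (n : ℕ) :
    IsProbabilityMeasure (cpow μ n) := by
  induction n with
  | zero => unfold cpow; infer_instance
  | succ n ih => unfold cpow; infer_instance

lemma iterate_le {k : ℕ} (f : (Fin k → ℝ) → ENNReal) (μ ν : Measure (Fin k → ℝ))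
    [IsProbabilityMeasure μ] [IsProbabilityMeasure ν] (K : ENNReal)
    (h : ∀ ρ : Measure (Fin k → ℝ), IsProbabilityMeasure ρ →
      ∫⁻ z, f z ∂(ρ.conv μ) ≤ ∫⁻ z, f z ∂(ρ.conv ν) + K) (n : ℕ) :
    ∀ ρ : Measure (Fin k → ℝ), IsProbabilityMeasure ρ →
      ∫⁻ z, f z ∂(ρ.conv (cpow μ n)) ≤ ∫⁻ z, f z ∂(ρ.conv (cpow ν n)) + n * K := by
  induction n with
  | zero => intro ρ _; simp [cpow]
  | succ n ih =>
    intro ρ _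
    have e1 : ρ.conv (cpow μ (n+1)) = (ρ.conv (cpow μ n)).conv μ := by
      rw [cpow, Measure.conv_assoc]
    have e2 : (ρ.conv (cpow μ n)).conv ν = (ρ.conv ν).conv (cpow μ n) := by
      rw [Measure.conv_assoc, Measure.conv_comm (cpow μ n), Measure.conv_assoc]
    have e3 : (ρ.conv ν).conv (cpow ν n) = ρ.conv (cpow ν (n+1)) := by
      rw [cpow, Measure.conv_assoc, Measure.conv_comm ν]
    rw [e1]
    refine (h _ inferInstance).trans ?_
    rw [e2]
    refine (add_le_add_left (ih _ inferInstance) K).trans ?_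
    rw [e3]
    push_cast
    rw [add_mul, one_mul, add_assoc]

lemma charFunDual_cpow {k : ℕ} (μ : Measure (Fin k → ℝ)) [IsProbabilityMeasure μ] (n : ℕ)
    (L : StrongDual ℝ (Fin k → ℝ)) : charFunDual (cpow μ n) L = charFunDual μ L ^ n := by
  induction n with
  | zero => simp [cpow, charFunDual_apply]
  | succ n ih => rw [cpow, charFunDual_conv, ih, pow_succ]

lemma cpow_gauss {k : ℕ} (μ : Measure (Fin k → ℝ)) [IsGaussian μ] (h0 : ∀ i, ∫ x, x i ∂μ = 0)
    (n : ℕ) (hn : 0 < n) :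
    cpow (μ.map (fun x => (√(n:ℝ))⁻¹ • x)) n = μ := by
  have hsm : Measurable (fun x : Fin k → ℝ => (√(n:ℝ))⁻¹ • x) := by fun_prop
  have hP1 : IsProbabilityMeasure (μ.map (fun x => (√(n:ℝ))⁻¹ • x)) :=
    Measure.isProbabilityMeasure_map hsm.aemeasurable
  have hL : ∀ L : StrongDual ℝ (Fin k → ℝ), μ[L] = 0 := fun L => by
    rw [IsGaussian.integral_dual]
    have : ∫ x, x ∂μ = 0 := by
      ext i
      rw [eval_integral (fun i => int_coord μ i)]
      exact h0 i
    rw [this, map_zero]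
  have hn' : (n:ℝ) ≠ 0 := by positivity
  refine Measure.ext_of_charFunDual ?_
  ext L
  rw [charFunDual_cpow]
  have e : charFunDual (μ.map (fun x => (√(n:ℝ))⁻¹ • x)) L = charFunDual μ ((√(n:ℝ))⁻¹ • L) := by
    rw [charFunDual_apply, integral_map hsm.aemeasurable (by fun_prop), charFunDual_apply]
    simp
  rw [e, IsGaussian.charFunDual_eq_of_forall_strongDual_eq_zero hL,
    IsGaussian.charFunDual_eq_of_forall_strongDual_eq_zero hL, ← Complex.exp_nat_mul]
  congr 1
  have : Var[((√(n:ℝ))⁻¹ • L : StrongDual ℝ (Fin k → ℝ)); μ] = (n:ℝ)⁻¹ * Var[L; μ] := by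
    have := variance_smul (√(n:ℝ))⁻¹ (fun x => L x) μ
    rw [inv_pow, Real.sq_sqrt (by positivity)] at this
    exact this
  rw [this]
  have hn2 : (n:ℂ) ≠ 0 := by exact_mod_cast hn'
  push_cast
  field_simp

lemma main_smooth {k : ℕ} {C : ℝ} (hC : 1 ≤ C) (μ ν : Measure (Fin k → ℝ)) [IsGaussian μ]
    [IsGaussian ν] (h0 : ∀ i, ∫ x, x i ∂μ = 0) (h0' : ∀ i, ∫ x, x i ∂ν = 0)
    (hD : CovDom μ ν) :
    ∫ x, Real.log (SS C x) ∂μ ≤ ∫ x, Real.log (SS C x) ∂ν := by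
  set K := 6 * (∫ x, ‖x‖ ^ 3 ∂μ + ∫ x, ‖x‖ ^ 3 ∂ν) with hK
  have hK0 : 0 ≤ K := by
    have h1 : 0 ≤ ∫ x, ‖x‖ ^ 3 ∂μ := integral_nonneg fun x => by positivity
    have h2 : 0 ≤ ∫ x, ‖x‖ ^ 3 ∂ν := integral_nonneg fun x => by positivity
    positivity
  have hlog : ∀ z : Fin k → ℝ, 0 ≤ Real.log (SS C z) := fun z => Real.log_nonneg (SS_ge hC z)
  have i1 : Integrable (fun x => Real.log (SS C x)) μ := by
    simpa using (expand hC μ h0 0 (zero_le_one)).1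
  have i2 : Integrable (fun x => Real.log (SS C x)) ν := by
    simpa using (expand hC ν h0' 0 (zero_le_one)).1
  have key : ∀ n : ℕ, 0 < n →
      ∫ x, Real.log (SS C x) ∂μ ≤ ∫ x, Real.log (SS C x) ∂ν + (√(n:ℝ))⁻¹ * K := by
    intro n hn
    have hsm : Measurable (fun x : Fin k → ℝ => (√(n:ℝ))⁻¹ • x) := by fun_prop
    have hP1 : IsProbabilityMeasure (μ.map (fun x => (√(n:ℝ))⁻¹ • x)) :=
      Measure.isProbabilityMeasure_map hsm.aemeasurable
    have hP2 : IsProbabilityMeasure (ν.map (fun x => (√(n:ℝ))⁻¹ • x)) :=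
      Measure.isProbabilityMeasure_map hsm.aemeasurable
    have hε : 0 ≤ (√(n:ℝ))⁻¹ := by positivity
    have := iterate_le _ _ _ _
      (fun ρ _ => step_le_lintegral hC μ ν h0 h0' hD hε ρ) n (Measure.dirac 0) inferInstance
    rw [cpow_gauss μ h0 n hn, cpow_gauss ν h0' n hn, Measure.dirac_zero_conv,
      Measure.dirac_zero_conv, ← ofReal_integral_eq_lintegral_ofReal i1 (ae_of_all _ hlog),
      ← ofReal_integral_eq_lintegral_ofReal i2 (ae_of_all _ hlog),
      ← ENNReal.ofReal_natCast, ← ENNReal.ofReal_mul (by positivity),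
      ← ENNReal.ofReal_add (integral_nonneg hlog) (by positivity),
      ENNReal.ofReal_le_ofReal_iff
        (add_nonneg (integral_nonneg hlog) (by positivity))] at this
    convert this using 2
    rw [← hK]
    have hs : √(n:ℝ) ≠ 0 := by positivity
    have hs2 : (n:ℝ) = √(n:ℝ) ^ 2 := (Real.sq_sqrt (by positivity)).symm
    nth_rw 2 [hs2]
    field_simp
  have lim : Tendsto (fun n : ℕ => ∫ x, Real.log (SS C x) ∂ν + (√(n:ℝ))⁻¹ * K) atTop
      (𝓝 (∫ x, Real.log (SS C x) ∂ν + 0 * K)) := by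
    refine tendsto_const_nhds.add (Tendsto.mul_const K ?_)
    exact tendsto_inv_atTop_zero.comp (Real.tendsto_sqrt_atTop.comp tendsto_natCast_atTop_atTop)
  rw [zero_mul, add_zero] at lim
  exact ge_of_tendsto lim ((eventually_gt_atTop 0).mono key)


lemma logSS_upper {k : ℕ} {a β : ℝ} (ha : 0 ≤ a) (hβ : 0 < β) (x : Fin k → ℝ) :
    Real.log (SS (Real.cosh (β * a)) (β • x)) ≤ Real.log (k + 1) + β * max a ‖x‖ := by
  have hc : ∀ y, |y| ≤ max a ‖x‖ → Real.cosh (β * y) ≤ Real.exp (β * max a ‖x‖) := by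
    intro y hy
    rw [Real.cosh_eq]
    have h1 : Real.exp (β * y) ≤ Real.exp (β * max a ‖x‖) :=
      Real.exp_le_exp.2 (mul_le_mul_of_nonneg_left ((le_abs_self y).trans hy) hβ.le)
    have h2 : Real.exp (-(β * y)) ≤ Real.exp (β * max a ‖x‖) := by
      rw [← mul_neg]
      exact Real.exp_le_exp.2 (mul_le_mul_of_nonneg_left ((neg_le_abs y).trans hy) hβ.le)
    linarith
  have h : SS (Real.cosh (β * a)) (β • x) ≤ (k + 1) * Real.exp (β * max a ‖x‖) := by
    unfold SS
    have h1 := hc a (by rw [abs_of_nonneg ha]; exact le_max_left _ _)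
    have h2 : ∑ i, Real.cosh ((β • x) i) ≤ ∑ i : Fin k, Real.exp (β * max a ‖x‖) :=
      Finset.sum_le_sum fun i _ => hc (x i) ((norm_le_pi_norm x i).trans (le_max_right _ _))
    simp at h2
    have h3 : ∑ i, Real.cosh ((β • x) i) = ∑ i, Real.cosh (β * x i) := rfl
    rw [h3]
    linarith
  calc _ ≤ Real.log ((k + 1) * Real.exp (β * max a ‖x‖)) :=
        Real.log_le_log (by linarith [SS_ge (Real.one_le_cosh (β * a)) (β • x)]) h
    _ = _ := by rw [Real.log_mul (by positivity) (Real.exp_pos _).ne', Real.log_exp]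

lemma logSS_lower {k : ℕ} {a β : ℝ} (hβ : 0 < β) (x : Fin k → ℝ) :
    β * max a ‖x‖ ≤ Real.log (SS (Real.cosh (β * a)) (β • x)) + Real.log 2 := by
  have hS := SS_ge (Real.one_le_cosh (β * a)) (β • x)
  set S := SS (Real.cosh (β * a)) (β • x) with hSd
  have hc : ∀ y, Real.cosh (β * y) ≤ S → β * |y| ≤ Real.log S + Real.log 2 := by
    intro y hy
    rw [← Real.log_mul (by positivity) (by norm_num), Real.le_log_iff_exp_le (by positivity)]
    have e : Real.cosh (β * y) = Real.cosh (β * |y|) := by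
      rw [← Real.cosh_abs, abs_mul, abs_of_pos hβ]
    rw [e, Real.cosh_eq] at hy
    have := Real.exp_pos (-(β * |y|))
    linarith
  have hn : ∀ i, 0 ≤ Real.cosh ((β • x) i) := fun i => (Real.cosh_pos _).le
  have ha : β * a ≤ Real.log S + Real.log 2 := by
    refine le_trans (mul_le_mul_of_nonneg_left (le_abs_self a) hβ.le) (hc a ?_)
    have := Finset.sum_nonneg fun i (_ : i ∈ Finset.univ) => hn i
    rw [hSd, SS]; linarith
  have hx : ‖x‖ ≤ (Real.log S + Real.log 2) / β := by
    refine (pi_norm_le_iff_of_nonneg ?_).2 fun i => ?_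
    · have := Real.log_nonneg hS
      have := Real.log_nonneg (one_le_two (α := ℝ))
      positivity
    · rw [le_div_iff₀ hβ, mul_comm]
      refine hc (x i) ?_
      have := Finset.single_le_sum (fun i _ => hn i) (Finset.mem_univ i)
      have h1 := Real.cosh_pos (β * a)
      rw [hSd, SS]
      simp only [Pi.smul_apply, smul_eq_mul] at this ⊢
      linarith
  rw [le_div_iff₀ hβ, mul_comm] at hx
  rcases max_choice a ‖x‖ with h | h <;> rw [h] <;> assumption

lemma int_max {k : ℕ} (μ : Measure (Fin k → ℝ)) [IsGaussian μ] (a : ℝ) :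
    Integrable (fun x => max a ‖x‖) μ := by
  have := int_pow μ 1
  simp only [pow_one] at this
  exact (integrable_const a).sup this

lemma scale_gauss {k : ℕ} (μ : Measure (Fin k → ℝ)) [IsGaussian μ] (β : ℝ) :
    IsGaussian (μ.map (fun x => β • x)) :=
  isGaussian_map (μ := μ) (β • ContinuousLinearMap.id ℝ (Fin k → ℝ))

lemma main_max {k : ℕ} (μ ν : Measure (Fin k → ℝ)) [IsGaussian μ]
    [IsGaussian ν] (h0 : ∀ i, ∫ x, x i ∂μ = 0) (h0' : ∀ i, ∫ x, x i ∂ν = 0)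
    (hD : CovDom μ ν) {a : ℝ} (ha : 0 ≤ a) :
    ∫ x, max a ‖x‖ ∂μ ≤ ∫ x, max a ‖x‖ ∂ν := by
  have key : ∀ β : ℝ, 0 < β → ∫ x, max a ‖x‖ ∂μ ≤ ∫ x, max a ‖x‖ ∂ν
      + (Real.log (k + 1) + Real.log 2) * β⁻¹ := by
    intro β hβ
    have hsm : Measurable (fun x : Fin k → ℝ => β • x) := by fun_prop
    have g1 := scale_gauss μ β
    have g2 := scale_gauss ν β
    have hC := Real.one_le_cosh (β * a)
    have ci : ∀ (ρ : Measure (Fin k → ℝ)) (i : Fin k),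
        ∫ x, x i ∂(ρ.map (fun x => β • x)) = β * ∫ x, x i ∂ρ := by
      intro ρ i
      rw [integral_map hsm.aemeasurable (measurable_pi_apply i).aestronglyMeasurable,
        ← integral_const_mul]
      rfl
    have cij : ∀ (ρ : Measure (Fin k → ℝ)) (i j : Fin k),
        ∫ x, x i * x j ∂(ρ.map (fun x => β • x)) = β ^ 2 * ∫ x, x i * x j ∂ρ := by
      intro ρ i j
      rw [integral_map hsm.aemeasurable (by fun_prop),
        ← integral_const_mul]
      congr 1; ext x; simp; ring
    have hc := main_smooth hC (μ.map (fun x => β • x)) (ν.map (fun x => β • x))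
      (fun i => by rw [ci, h0, mul_zero]) (fun i => by rw [ci, h0', mul_zero])
      (fun i j => by
        simp only [cij]
        rw [← mul_sub, ← mul_sub, ← mul_sub, ← mul_add, abs_mul, abs_of_nonneg (sq_nonneg β)]
        have := mul_le_mul_of_nonneg_left (hD i j) (sq_nonneg β)
        linarith)
    rw [integral_map hsm.aemeasurable (cont_logSS hC).aestronglyMeasurable,
      integral_map hsm.aemeasurable (cont_logSS hC).aestronglyMeasurable] at hc
    have i1 : Integrable (fun x => Real.log (SS (Real.cosh (β * a)) (β • x))) μ := by
      simpa using (expand hC μ h0 0 hβ.le).1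
    have i2 : Integrable (fun x => Real.log (SS (Real.cosh (β * a)) (β • x))) ν := by
      simpa using (expand hC ν h0' 0 hβ.le).1
    have l := integral_mono ((int_max μ a).const_mul β) (i1.add (integrable_const (Real.log 2)))
      (fun x => logSS_lower hβ x)
    have u := integral_mono i2 ((integrable_const (Real.log (k + 1))).add
      ((int_max ν a).const_mul β)) (fun x => logSS_upper ha hβ x)
    simp only [Pi.add_apply] at l u
    rw [integral_add i1 (integrable_const _), integral_const_mul] at l
    rw [integral_add (integrable_const _) ((int_max ν a).const_mul β), integral_const_mul] at u
    simp at l u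
    have : β * ∫ x, max a ‖x‖ ∂μ ≤ β * (∫ x, max a ‖x‖ ∂ν
      + (Real.log (k + 1) + Real.log 2) * β⁻¹) := by
      have : β * (∫ x, max a ‖x‖ ∂ν + (Real.log (k + 1) + Real.log 2) * β⁻¹)
        = β * ∫ x, max a ‖x‖ ∂ν + (Real.log (k + 1) + Real.log 2) := by field_simp
      rw [this]; linarith
    exact le_of_mul_le_mul_left this hβ
  have lim : Tendsto (fun β : ℝ => ∫ x, max a ‖x‖ ∂ν + (Real.log (k + 1) + Real.log 2) * β⁻¹) atTop
      (𝓝 (∫ x, max a ‖x‖ ∂ν + (Real.log (k + 1) + Real.log 2) * 0)) :=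
    tendsto_const_nhds.add (Tendsto.const_mul _ tendsto_inv_atTop_zero)
  rw [mul_zero, add_zero] at lim
  exact ge_of_tendsto lim ((eventually_gt_atTop 0).mono key)

lemma layer {m : ℝ} (hm : 1 < m) {u : ℝ} (hu : 0 ≤ u) :
    ENNReal.ofReal (u ^ m) =
      ∫⁻ a in Set.Ioi (0:ℝ), ENNReal.ofReal (m * (m - 1) * a ^ (m - 2) * (max a u - a)) := by
  have hun : Set.Ioi (0:ℝ) = Set.Ioc 0 u ∪ Set.Ioi u := (Set.Ioc_union_Ioi_eq_Ioi hu).symm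
  rw [hun, lintegral_union measurableSet_Ioi (Set.Ioc_disjoint_Ioi le_rfl)]
  have h2 : ∫⁻ a in Set.Ioi u, ENNReal.ofReal (m * (m - 1) * a ^ (m - 2) * (max a u - a)) = 0 := by
    rw [setLIntegral_congr_fun measurableSet_Ioi (g := fun _ => 0)]
    · simp
    · intro a ha
      simp only
      rw [max_eq_left (le_of_lt ha)]; simp
  have h1 : ∫⁻ a in Set.Ioc 0 u, ENNReal.ofReal (m * (m - 1) * a ^ (m - 2) * (max a u - a))
      = ∫⁻ a in Set.Ioc 0 u,
        ENNReal.ofReal (m * (m - 1) * (u * a ^ (m - 2) - a ^ (m - 1))) := by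
    refine setLIntegral_congr_fun measurableSet_Ioc fun a ha => ?_
    rw [max_eq_right ha.2, show m - 1 = (m - 2) + 1 by ring, Real.rpow_add_one ha.1.ne']
    congr 1; ring
  have j1 : IntervalIntegrable (fun a : ℝ => u * a ^ (m - 2)) volume 0 u :=
    (intervalIntegral.intervalIntegrable_rpow' (by linarith)).const_mul u
  have j2 : IntervalIntegrable (fun a : ℝ => a ^ (m - 1)) volume 0 u :=
    (intervalIntegral.intervalIntegrable_rpow' (by linarith))
  have j3 := (j1.sub j2).const_mul (m * (m - 1))
  rw [h2, add_zero, h1, ← ofReal_integral_eq_lintegral_ofReal]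
  · congr 1
    rw [← intervalIntegral.integral_of_le hu, intervalIntegral.integral_const_mul,
      intervalIntegral.integral_sub j1 j2, intervalIntegral.integral_const_mul,
      integral_rpow (Or.inl (by linarith)), integral_rpow (Or.inl (by linarith))]
    rw [show m - 2 + 1 = m - 1 by ring, show m - 1 + 1 = m by ring,
      Real.zero_rpow (by linarith), Real.zero_rpow (by linarith)]
    have hum : u ^ m = u * u ^ (m - 1) := by
      rcases hu.eq_or_lt with h | h
      · rw [← h, Real.zero_rpow (by linarith)]; simp
      · rw [← Real.rpow_one_add' hu (by linarith)]; congr 1; ring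
    have : m - 1 ≠ 0 := by linarith
    have : m ≠ 0 := by linarith
    rw [hum]
    field_simp
    ring
  · exact (intervalIntegrable_iff_integrableOn_Ioc_of_le hu).1 j3
  · refine (ae_restrict_iff' measurableSet_Ioc).2 (ae_of_all _ fun a ha => ?_)
    simp only [Pi.zero_apply]
    rw [show m - 1 = (m - 2) + 1 by ring, Real.rpow_add_one ha.1.ne']
    have h3 : 0 ≤ a ^ (m - 2) := Real.rpow_nonneg ha.1.le _
    have h4 : 0 ≤ m - 2 + 1 := by linarith
    have h5 : u * a ^ (m - 2) - a ^ (m - 2) * a = a ^ (m - 2) * (u - a) := by ring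
    rw [h5]
    have h6 : 0 ≤ u - a := by linarith [ha.2]
    positivity

lemma int_rpow {k : ℕ} (μ : Measure (Fin k → ℝ)) [IsGaussian μ] {m : ℝ} (hm : 1 ≤ m) :
    Integrable (fun x => ‖x‖ ^ m) μ := by
  have := (IsGaussian.memLp_id μ (ENNReal.ofReal m) (by simp)).integrable_norm_rpow
    (by simp; linarith) (by simp)
  rw [ENNReal.toReal_ofReal (by linarith)] at this
  simpa using this

lemma main_norm {k : ℕ} (μ ν : Measure (Fin k → ℝ)) [IsGaussian μ]
    [IsGaussian ν] (h0 : ∀ i, ∫ x, x i ∂μ = 0) (h0' : ∀ i, ∫ x, x i ∂ν = 0)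
    (hD : CovDom μ ν) {m : ℝ} (hm : 1 ≤ m) :
    ∫ x, ‖x‖ ^ m ∂μ ≤ ∫ x, ‖x‖ ^ m ∂ν := by
  rcases hm.eq_or_lt with h1 | h1
  · have := main_max μ ν h0 h0' hD le_rfl
    simpa [← h1] using this
  have conv : ∀ (ρ : Measure (Fin k → ℝ)) [IsGaussian ρ],
      ENNReal.ofReal (∫ x, ‖x‖ ^ m ∂ρ) = ∫⁻ a in Set.Ioi (0:ℝ),
        ENNReal.ofReal (∫ x, m * (m - 1) * a ^ (m - 2) * (max a ‖x‖ - a) ∂ρ) := by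
    intro ρ _
    rw [ofReal_integral_eq_lintegral_ofReal (int_rpow ρ hm)
      (ae_of_all _ fun x => Real.rpow_nonneg (norm_nonneg x) m)]
    simp_rw [layer h1 (norm_nonneg _)]
    rw [lintegral_lintegral_swap]
    · refine setLIntegral_congr_fun measurableSet_Ioi fun a ha => ?_
      rw [ofReal_integral_eq_lintegral_ofReal]
      · exact (((int_max ρ a).sub (integrable_const a))).const_mul _
      · refine ae_of_all _ fun x => ?_
        have h3 : 0 ≤ a ^ (m - 2) := Real.rpow_nonneg (le_of_lt ha) _
        have h4 : 0 ≤ m - 1 := by linarith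
        have h5 : 0 ≤ max a ‖x‖ - a := by linarith [le_max_left a ‖x‖]
        simp only [Pi.zero_apply]
        positivity
    · refine Measurable.aemeasurable ?_
      unfold Function.uncurry
      fun_prop
  have hfin : 0 ≤ ∫ x, ‖x‖ ^ m ∂ν := integral_nonneg fun x => Real.rpow_nonneg (norm_nonneg x) m
  rw [← ENNReal.ofReal_le_ofReal_iff hfin, conv μ, conv ν]
  refine setLIntegral_mono' measurableSet_Ioi fun a ha => ?_
  refine ENNReal.ofReal_le_ofReal ?_
  rw [integral_const_mul, integral_const_mul, integral_sub (int_max μ a) (integrable_const a),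
    integral_sub (int_max ν a) (integrable_const a)]
  refine mul_le_mul_of_nonneg_left ?_ ?_
  · have := main_max μ ν h0 h0' hD (le_of_lt ha)
    simpa using this
  · have h3 : 0 ≤ a ^ (m - 2) := Real.rpow_nonneg (le_of_lt ha) _
    have h4 : 0 ≤ m - 1 := by linarith
    positivity


lemma fp_bounds {k : ℕ} {m : ℝ} (hm : 1 ≤ m) (x : Fin k → ℝ) {n : ℕ} (hn : 0 < n) :
    ‖x‖ ^ m ≤ ((∑ i, x i ^ (2 * n)) + Real.exp (-(2 * (n : ℝ)) ^ 2)) ^ (m / (2 * (n : ℝ))) ∧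
    ((∑ i, x i ^ (2 * n)) + Real.exp (-(2 * (n : ℝ)) ^ 2)) ^ (m / (2 * (n : ℝ))) ≤
      ((k:ℝ) + 1) ^ (m / (2 * (n : ℝ))) * (max ‖x‖ (Real.exp (-(2 * (n:ℝ))))) ^ m := by
  have hn' : (0:ℝ) < 2 * (n:ℝ) := by positivity
  have hm0 : 0 < m := by linarith
  have hp : ∀ i, x i ^ (2 * n) = |x i| ^ (2 * n) := fun i => ((even_two_mul n).pow_abs _).symm
  set b := (∑ i, x i ^ (2 * n)) + Real.exp (-(2 * (n : ℝ)) ^ 2) with hb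
  have hs0 : ∀ i, 0 ≤ x i ^ (2 * n) := fun i => by rw [hp]; positivity
  have hs : 0 ≤ ∑ i, x i ^ (2 * n) := Finset.sum_nonneg fun i _ => hs0 i
  have hb0 : 0 < b := by have := Real.exp_pos (-(2 * (n : ℝ)) ^ 2); linarith
  constructor
  · have h1 : ‖x‖ ≤ b ^ (1 / (2 * (n:ℝ))) := by
      refine (pi_norm_le_iff_of_nonneg (Real.rpow_nonneg hb0.le _)).2 fun i => ?_
      rw [Real.norm_eq_abs]
      have h2 : |x i| ^ (2 * n) ≤ b := by
        rw [← hp]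
        have := Finset.single_le_sum (fun i _ => hs0 i) (Finset.mem_univ i)
        have := Real.exp_pos (-(2 * (n : ℝ)) ^ 2)
        linarith
      have h3 : |x i| = (|x i| ^ (2 * n)) ^ (1 / (2 * (n:ℝ))) := by
        rw [← Real.rpow_natCast, ← Real.rpow_mul (abs_nonneg _)]
        push_cast
        rw [mul_one_div_cancel hn'.ne', Real.rpow_one]
      rw [h3]
      exact Real.rpow_le_rpow (by positivity) h2 (by positivity)
    calc ‖x‖ ^ m ≤ (b ^ (1 / (2 * (n:ℝ)))) ^ m :=
          Real.rpow_le_rpow (norm_nonneg _) h1 hm0.le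
      _ = _ := by rw [← Real.rpow_mul hb0.le]; congr 1; ring
  · set M := max ‖x‖ (Real.exp (-(2 * (n:ℝ)))) with hM
    have hM0 : 0 ≤ M := (norm_nonneg x).trans (le_max_left _ _)
    have h1 : b ≤ ((k:ℝ) + 1) * M ^ (2 * n) := by
      have e1 : ∑ i, x i ^ (2 * n) ≤ ∑ i : Fin k, M ^ (2 * n) :=
        Finset.sum_le_sum fun i _ => by
          rw [hp]
          exact pow_le_pow_left₀ (abs_nonneg _) ((norm_le_pi_norm x i).trans (le_max_left _ _)) _
      have e2 : Real.exp (-(2 * (n : ℝ)) ^ 2) ≤ M ^ (2 * n) := by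
        have : Real.exp (-(2 * (n : ℝ)) ^ 2) = Real.exp (-(2 * (n:ℝ))) ^ (2 * n) := by
          rw [← Real.exp_nat_mul]; congr 1; push_cast; ring
        rw [this]
        exact pow_le_pow_left₀ (Real.exp_pos _).le (le_max_right _ _) _
      simp at e1
      rw [hb]; linarith
    calc _ ≤ (((k:ℝ) + 1) * M ^ (2 * n)) ^ (m / (2 * (n : ℝ))) :=
          Real.rpow_le_rpow hb0.le h1 (by positivity)
      _ = _ := by
          rw [Real.mul_rpow (by positivity) (by positivity), ← Real.rpow_natCast,
            ← Real.rpow_mul hM0]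
          congr 2
          push_cast
          field_simp

lemma fp_tendsto {k : ℕ} (μ : Measure (Fin k → ℝ)) [IsGaussian μ] {m : ℝ} (hm : 1 ≤ m) :
    Tendsto (fun n : ℕ => ∫ x, ((∑ i, x i ^ (2 * n)) + Real.exp (-(2 * (n : ℝ)) ^ 2))
      ^ (m / (2 * (n : ℝ))) ∂μ) atTop (𝓝 (∫ x, ‖x‖ ^ m ∂μ)) := by
  have hm0 : 0 < m := by linarith
  have tn : Tendsto (fun n : ℕ => 2 * (n:ℝ)) atTop atTop :=
    tendsto_natCast_atTop_atTop.const_mul_atTop (by norm_num)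
  refine tendsto_integral_filter_of_dominated_convergence
    (fun x => ((k:ℝ) + 1) ^ m * (1 + ‖x‖) ^ m) ?_ ?_ ?_ ?_
  · refine Eventually.of_forall fun n => Measurable.aestronglyMeasurable ?_
    fun_prop
  · filter_upwards [eventually_gt_atTop 0] with n hn
    refine ae_of_all _ fun x => ?_
    obtain ⟨h1, h2⟩ := fp_bounds hm x hn
    rw [Real.norm_eq_abs, abs_of_nonneg ((Real.rpow_nonneg (norm_nonneg x) m).trans h1)]
    refine h2.trans ?_
    have hn1 : (1:ℝ) ≤ n := by exact_mod_cast hn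
    refine mul_le_mul ?_ ?_ (by positivity) (by positivity)
    · refine Real.rpow_le_rpow_of_exponent_le (by simp) ?_
      exact div_le_self hm0.le (by linarith)
    · refine Real.rpow_le_rpow (by positivity) (max_le (by linarith) ?_) hm0.le
      have : Real.exp (-(2 * (n:ℝ))) ≤ 1 := Real.exp_le_one_iff.2 (by linarith)
      linarith [norm_nonneg x]
  · refine Integrable.const_mul ?_ _
    have h1 : MemLp (fun x : Fin k → ℝ => 1 + ‖x‖) (ENNReal.ofReal m) μ :=
      (memLp_const (1:ℝ)).add (IsGaussian.memLp_id μ (ENNReal.ofReal m) (by simp)).norm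
    have := h1.integrable_norm_rpow (by simp; linarith) (by simp)
    rw [ENNReal.toReal_ofReal hm0.le] at this
    refine this.congr (ae_of_all _ fun x => ?_)
    simp only
    rw [Real.norm_eq_abs, abs_of_nonneg (by positivity)]
  · refine ae_of_all _ fun x => ?_
    have u1 : Tendsto (fun n : ℕ => ((k:ℝ) + 1) ^ (m / (2 * (n : ℝ)))) atTop (𝓝 1) := by
      have h1 : Tendsto (fun n : ℕ => m / (2 * (n:ℝ))) atTop (𝓝 0) := tn.const_div_atTop m
      have := (Real.continuousAt_const_rpow (a := (k:ℝ) + 1) (b := 0) (by positivity)).tendsto.comp h1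
      simpa [Function.comp_def] using this
    have u2 : Tendsto (fun n : ℕ => (max ‖x‖ (Real.exp (-(2 * (n:ℝ))))) ^ m) atTop
        (𝓝 (‖x‖ ^ m)) := by
      have h1 : Tendsto (fun n : ℕ => Real.exp (-(2 * (n:ℝ)))) atTop (𝓝 0) :=
        Real.tendsto_exp_neg_atTop_nhds_zero.comp tn
      have h2 : Tendsto (fun n : ℕ => max ‖x‖ (Real.exp (-(2 * (n:ℝ))))) atTop (𝓝 ‖x‖) := by
        have := (tendsto_const_nhds (x := ‖x‖)).max h1
        rwa [max_eq_left (norm_nonneg x)] at this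
      exact h2.rpow_const (Or.inr hm0.le)
    have u := u1.mul u2
    rw [one_mul] at u
    refine tendsto_of_tendsto_of_tendsto_of_le_of_le' tendsto_const_nhds u ?_ ?_
    · filter_upwards [eventually_gt_atTop 0] with n hn using (fp_bounds hm x hn).1
    · filter_upwards [eventually_gt_atTop 0] with n hn using (fp_bounds hm x hn).2

lemma gauss_law {Ω : Type*} [MeasurableSpace Ω] {k : ℕ} (P : Measure Ω)
    (X : Ω → Fin k → ℝ) (hXmeas : Measurable X) (hX : IsCenteredGaussianVec P X) :
    IsGaussian (P.map X) ∧ ∀ i, ∫ x, x i ∂(P.map X) = 0 := by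
  constructor
  · refine isGaussian_of_map_eq_gaussianReal fun L =>
      ⟨0, (variance (fun ω => ∑ i, L (Pi.single i 1) * X ω i) P).toNNReal, ?_⟩
    · rw [Measure.map_map (by fun_prop) hXmeas]
      have := hX (fun i => L (Pi.single i 1))
      rw [← this]
      congr 1
      ext ω
      simp only [Function.comp_apply]
      conv_lhs => rw [← Finset.univ_sum_single (X ω), map_sum]
      refine Finset.sum_congr rfl fun i _ => ?_
      have : (Pi.single i (X ω i) : Fin k → ℝ) = X ω i • Pi.single i 1 := by
        rw [← Pi.single_smul]; simp
      rw [this, map_smul, smul_eq_mul, mul_comm]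
  · intro i
    rw [integral_map hXmeas.aemeasurable (measurable_pi_apply i).aestronglyMeasurable]
    have := hX (Pi.single i 1)
    have e : (fun ω => ∑ j, (Pi.single i 1 : Fin k → ℝ) j * X ω j) = fun ω => X ω i := by
      ext ω; simp [Pi.single_apply]
    rw [e] at this
    have h2 : ∫ ω, X ω i ∂P = ∫ y, y ∂(P.map (fun ω => X ω i)) := by
      rw [integral_map (by fun_prop) (by fun_prop)]
    rw [h2, this]
    simp

/-- **Key limsup estimate.** Let `X ~ N(0, SX)`, `Y ~ N(0, SY)` be nondegenerate
centered Gaussian vectors in `ℝ^k` with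
`2 |SX i j - SY i j| ≤ (SY i i - SX i i) + (SY j j - SX j j)` for all `i j`. Fix `m ≥ 1`
and, for an even integer `p = 2n`, set `f_p(x) = (x_1^p + ... + x_k^p + e^(-p²))^(m/p)`.
Then `limsup_{p → ∞, p even} (E[f_p(X)] - E[f_p(Y)]) ≤ 0`. -/
theorem limsup_fp_difference_nonpos
    {Ω : Type*} [MeasurableSpace Ω] {k : ℕ} (P : Measure Ω) [IsProbabilityMeasure P]
    (X Y : Ω → Fin k → ℝ) (hXmeas : Measurable X) (hYmeas : Measurable Y)
    (hX : IsCenteredGaussianVec P X) (hY : IsCenteredGaussianVec P Y)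
    (SX SY : Fin k → Fin k → ℝ)
    (hSX : ∀ i j, SX i j = ∫ ω, X ω i * X ω j ∂P)
    (hSY : ∀ i j, SY i j = ∫ ω, Y ω i * Y ω j ∂P)
    (hcond : ∀ i j, 2 * |SX i j - SY i j| ≤ SY i i - SX i i + (SY j j - SX j j))
    (hvarX : ∀ i, 0 < variance (fun ω => X ω i) P)
    (hvarY : ∀ i, 0 < variance (fun ω => Y ω i) P)
    (hcorrX : ∀ i j, i ≠ j → |corr P (fun ω => X ω i) (fun ω => X ω j)| < 1)
    (hcorrY : ∀ i j, i ≠ j → |corr P (fun ω => Y ω i) (fun ω => Y ω j)| < 1)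
    (m : ℝ) (hm : 1 ≤ m) :
    Filter.limsup
      (fun n : ℕ =>
        (∫ ω, ((∑ i, X ω i ^ (2 * n)) + Real.exp (-(2 * (n : ℝ)) ^ 2))
            ^ (m / (2 * (n : ℝ))) ∂P)
        - ∫ ω, ((∑ i, Y ω i ^ (2 * n)) + Real.exp (-(2 * (n : ℝ)) ^ 2))
            ^ (m / (2 * (n : ℝ))) ∂P)
      atTop ≤ 0 := by
  obtain ⟨gX, zX⟩ := gauss_law P X hXmeas hX
  obtain ⟨gY, zY⟩ := gauss_law P Y hYmeas hY
  have cX : ∀ i j, ∫ x, x i * x j ∂(P.map X) = SX i j := fun i j => by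
    rw [integral_map hXmeas.aemeasurable (by fun_prop), hSX]
  have cY : ∀ i j, ∫ x, x i * x j ∂(P.map Y) = SY i j := fun i j => by
    rw [integral_map hYmeas.aemeasurable (by fun_prop), hSY]
  have hD : CovDom (P.map X) (P.map Y) := fun i j => by
    simp only [cX, cY]; exact hcond i j
  have h := main_norm (P.map X) (P.map Y) zX zY hD hm
  have t := (fp_tendsto (P.map X) hm).sub (fp_tendsto (P.map Y) hm)
  have eX : ∀ (Z : Ω → Fin k → ℝ), Measurable Z → ∀ n : ℕ,
      ∫ x, ((∑ i, x i ^ (2 * n)) + Real.exp (-(2 * (n : ℝ)) ^ 2))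
        ^ (m / (2 * (n : ℝ))) ∂(P.map Z) =
      ∫ ω, ((∑ i, Z ω i ^ (2 * n)) + Real.exp (-(2 * (n : ℝ)) ^ 2))
            ^ (m / (2 * (n : ℝ))) ∂P := fun Z hZ n => by
    rw [integral_map hZ.aemeasurable]
    refine Measurable.aestronglyMeasurable ?_
    fun_prop
  simp only [eX X hXmeas, eX Y hYmeas] at t
  rw [t.limsup_eq]
  linarith
end
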